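/- arXiv:2309.05155 — 7 statements merged into one kernel-verified Lean document; each statement's English description precedes it below -/
import Mathlib

section
/- Let ℓ : ℕ → ℕ and q : ℕ → ℝ satisfy q(n) · 2^{ℓ(n)} > n + 1 for all n ∈ ℕ. Let (μ_t)_{t∈ℕ} be a countable family, where each μ_t assigns to every n ∈ ℕ a subprobability distribution μ_{t,n} on {0,1}^{ℓ(n)}. Then there exists an ℓ-sequence (s_n)_{n∈ℕ} such that for every t ∈ ℕ and every n ≥ t, μ_{t,n}(s_n) < q(n). -/
/-!
Only finitely many distributions have to be avoided at each length `n`. Their sum has total mass at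
most their number, which is less than `q n` times the number of strings, so by averaging some
string has summed weight below `q n`. As the weights are nonnegative, each distribution on its own
gives that string weight below `q n`.
-/

open Finset

section Averaging

variable {ι α M : Type*} [AddCommMonoid M] [LinearOrder M] [IsOrderedCancelAddMonoid M]
  {T : Finset ι} {A : Finset α} {f : ι → α → M} {c : ι → M} {b : M}

theorem exists_sum_lt_of_sum_lt_card_nsmul (hf : ∀ t ∈ T, ∑ x ∈ A, f t x ≤ c t)
    (hc : ∑ t ∈ T, c t < #A • b) : ∃ x ∈ A, ∑ t ∈ T, f t x < b := by
  apply exists_lt_of_sum_lt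
  calc ∑ x ∈ A, ∑ t ∈ T, f t x
      = ∑ t ∈ T, ∑ x ∈ A, f t x := sum_comm
    _ ≤ ∑ t ∈ T, c t := sum_le_sum hf
    _ < #A • b := hc
    _ = ∑ _x ∈ A, b := (sum_const b).symm

theorem exists_forall_lt_of_sum_lt_card_nsmul (hf₀ : ∀ t ∈ T, ∀ x ∈ A, 0 ≤ f t x)
    (hf : ∀ t ∈ T, ∑ x ∈ A, f t x ≤ c t) (hc : ∑ t ∈ T, c t < #A • b) :
    ∃ x ∈ A, ∀ t ∈ T, f t x < b := by
  obtain ⟨x, hxA, hx⟩ := exists_sum_lt_of_sum_lt_card_nsmul hf hc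
  have le_sum : ∀ t ∈ T, f t x ≤ ∑ i ∈ T, f i x := fun t ht ↦
    single_le_sum (f := fun i ↦ f i x) (fun i hi ↦ hf₀ i hi x hxA) ht
  exact ⟨x, hxA, fun t ht ↦ (le_sum t ht).trans_lt hx⟩

end Averaging

theorem exists_ingenerable_sequence_general {ι κ R : Type*} [Semiring R] [LinearOrder R]
    [IsStrictOrderedRing R] {Ω : κ → Type*} [∀ n, Fintype (Ω n)] (T : κ → Finset ι) (q : κ → R)
    (h : ∀ n, (#(T n) : R) < q n * Fintype.card (Ω n)) (μ : ι → ∀ n, Ω n → R)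
    (hnn : ∀ n, ∀ t ∈ T n, ∀ x, 0 ≤ μ t n x) (hsum : ∀ n, ∀ t ∈ T n, ∑ x, μ t n x ≤ 1) :
    ∃ s : ∀ n, Ω n, ∀ n, ∀ t ∈ T n, μ t n (s n) < q n := by
  have exists_light : ∀ n, ∃ x, ∀ t ∈ T n, μ t n x < q n := by
    intro n
    have mass_lt : ∑ _t ∈ T n, (1 : R) < #(univ : Finset (Ω n)) • q n := by
      simpa only [sum_const, card_univ, nsmul_eq_mul', one_mul] using h n
    obtain ⟨x, -, hx⟩ := exists_forall_lt_of_sum_lt_card_nsmul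
      (fun t ht x _ ↦ hnn n t ht x) (hsum n) mass_lt
    exact ⟨x, hx⟩
  exact Classical.skolem.mp exists_light

/-- Diagonalization against a countable family of subprobability
distributions: there is an `ℓ`-sequence `s` such that `μ t n (s n) < q n`
whenever `n ≥ t`. -/
theorem exists_ingenerable_sequence (ℓ : ℕ → ℕ) (q : ℕ → ℝ)
    (h : ∀ n : ℕ, (n : ℝ) + 1 < q n * 2 ^ ℓ n)
    (μ : ℕ → ∀ n : ℕ, (Fin (ℓ n) → Bool) → ℝ)
    (hnn : ∀ t n x, 0 ≤ μ t n x)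
    (hsum : ∀ t n, ∑ x : Fin (ℓ n) → Bool, μ t n x ≤ 1) :
    ∃ s : ∀ n : ℕ, Fin (ℓ n) → Bool, ∀ t n : ℕ, t ≤ n → μ t n (s n) < q n := by
  obtain ⟨s, hs⟩ := exists_ingenerable_sequence_general (fun n ↦ Iic n) q
    (fun n ↦ by simpa using h n) μ (fun n t _ ↦ hnn t n) (fun n t _ ↦ hsum t n)
  exact ⟨s, fun t n htn ↦ hs n t (mem_Iic.mpr htn)⟩
end

section
/- Let 𝒳 be a finite set, let p : 𝒳 → [0,1], and let s ∈ 𝒳. For each subset Y ⊆ 𝒳 let Pr[Y] = (∏_{x∈Y} p(x)) · (∏_{x∈𝒳∖Y} (1 − p(x))). Then p(s) / (1 + Σ_{x∈𝒳, x≠s} p(x)) ≤ Σ_{Y⊆𝒳 with s∈Y} (1/|Y|) · Pr[Y]. -/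
/-!
Given `s ∈ Y`, the rest `Z = Y \ {s}` is a random subset of `𝒳 \ {s}` with the same inclusion
probabilities, so the right-hand side is `p s * 𝔼[1 / (1 + |Z|)]`. Since `t ↦ 1 / (1 + t)` is convex
and `𝔼|Z| = ∑ x ≠ s, p x`, Jensen's inequality gives the bound. The identity for `𝔼|Z|` comes from
the same conditioning step, applied to each `x` in turn.
-/

open Finset

section CommRing

variable {X R : Type*} [DecidableEq X] [CommRing R]

/-- The probability that a random subset of `T`, containing each `x ∈ T` independently with
probability `p x`, equals `Y`. It has this meaning only for `Y ⊆ T`. -/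
def subsetWeight (p : X → R) (T Y : Finset X) : R :=
  (∏ x ∈ Y, p x) * ∏ x ∈ T \ Y, (1 - p x)

theorem sum_powerset_subsetWeight (p : X → R) (T : Finset X) :
    ∑ Y ∈ T.powerset, subsetWeight p T Y = 1 := by
  simp only [subsetWeight, ← prod_add, add_sub_cancel, prod_const_one]

theorem subsetWeight_insert (p : X → R) (T : Finset X) {Z : Finset X} {s : X} (hs : s ∉ Z) :
    subsetWeight p T (insert s Z) = p s * subsetWeight p (T.erase s) Z := by
  have sdiff_insert_eq : T \ insert s Z = T.erase s \ Z := by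
    rw [sdiff_insert, erase_sdiff_comm]
  rw [subsetWeight, subsetWeight, prod_insert hs, sdiff_insert_eq, mul_assoc]

theorem sum_powerset_filter_mem_mul_subsetWeight (p : X → R) {T : Finset X} {s : X} (hs : s ∈ T)
    (g : Finset X → R) :
    ∑ Y ∈ T.powerset with s ∈ Y, g Y * subsetWeight p T Y =
      p s * ∑ Z ∈ (T.erase s).powerset, g (insert s Z) * subsetWeight p (T.erase s) Z := by
  have notMem_of_mem {Z : Finset X} (hZ : Z ∈ (T.erase s).powerset) : s ∉ Z :=
    fun h ↦ notMem_erase s T (mem_powerset.mp hZ h)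
  rw [mul_sum]
  symm
  refine sum_nbij' (insert s) (·.erase s) ?_ ?_ ?_ ?_ ?_
  · intro Z hZ
    have hZT : Z ⊆ T := (mem_powerset.mp hZ).trans (erase_subset s T)
    simp [insert_subset hs hZT]
  · intro Y hY
    exact mem_powerset.mpr (erase_subset_erase s (mem_powerset.mp (mem_filter.mp hY).1))
  · exact fun Z hZ ↦ erase_insert (notMem_of_mem hZ)
  · exact fun Y hY ↦ insert_erase (mem_filter.mp hY).2
  · intro Z hZ
    rw [subsetWeight_insert p T (notMem_of_mem hZ), mul_left_comm]

theorem sum_powerset_filter_mem_subsetWeight (p : X → R) {T : Finset X} {s : X} (hs : s ∈ T) :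
    ∑ Y ∈ T.powerset with s ∈ Y, subsetWeight p T Y = p s := by
  simpa only [one_mul, sum_powerset_subsetWeight, mul_one] using
    sum_powerset_filter_mem_mul_subsetWeight p hs fun _ ↦ 1

theorem sum_powerset_subsetWeight_mul_card (p : X → R) (T : Finset X) :
    ∑ Y ∈ T.powerset, subsetWeight p T Y * (#Y : R) = ∑ x ∈ T, p x := by
  calc ∑ Y ∈ T.powerset, subsetWeight p T Y * (#Y : R)
      = ∑ Y ∈ T.powerset, ∑ _x ∈ Y, subsetWeight p T Y := by
        simp only [sum_const, nsmul_eq_mul, mul_comm]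
    _ = ∑ x ∈ T, ∑ Y ∈ T.powerset with x ∈ Y, subsetWeight p T Y :=
        sum_comm' fun Y x ↦ by
          simp only [mem_powerset, mem_filter]
          exact ⟨fun ⟨hY, hx⟩ ↦ ⟨⟨hY, hx⟩, hY hx⟩, fun ⟨h, _⟩ ↦ h⟩
    _ = ∑ x ∈ T, p x := sum_congr rfl fun _ hx ↦ sum_powerset_filter_mem_subsetWeight p hx

end CommRing

theorem subsetWeight_nonneg {X R : Type*} [DecidableEq X] [CommRing R] [PartialOrder R]
    [IsOrderedRing R] {p : X → R} {T Y : Finset X} (hp : ∀ x ∈ T, p x ∈ Set.Icc 0 1)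
    (hY : Y ⊆ T) : 0 ≤ subsetWeight p T Y :=
  mul_nonneg (prod_nonneg fun x hx ↦ (hp x (hY hx)).1)
    (prod_nonneg fun x hx ↦ sub_nonneg.mpr (hp x (sdiff_subset hx)).2)

section LinearOrderedField

variable {X K : Type*} [DecidableEq X] [Field K] [LinearOrder K] [IsStrictOrderedRing K]

theorem map_sum_le_sum_powerset_subsetWeight_mul_map_card {p : X → K} {T : Finset X}
    (hp : ∀ x ∈ T, p x ∈ Set.Icc 0 1) {D : Set K} {f : K → K} (hf : ConvexOn K D f)
    (hD : ∀ n ≤ #T, (n : K) ∈ D) :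
    f (∑ x ∈ T, p x) ≤ ∑ Y ∈ T.powerset, subsetWeight p T Y * f #Y := by
  rw [← sum_powerset_subsetWeight_mul_card p T]
  exact hf.map_sum_le (fun Y hY ↦ subsetWeight_nonneg hp (mem_powerset.mp hY))
    (sum_powerset_subsetWeight p T) fun Y hY ↦ hD _ (card_le_card (mem_powerset.mp hY))

theorem convexOn_one_div_add (c : K) : ConvexOn K (Set.Ioi (-c)) fun t ↦ 1 / (c + t) := by
  have convexOn_translate := (convexOn_zpow (𝕜 := K) (-1)).translate_right c
  simpa [Function.comp_def, ← neg_lt_iff_pos_add', Set.preimage, Set.Ioi] using convexOn_translate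

theorem random_subset_uniform_output_bound_general {p : X → K} {T : Finset X} {s : X}
    (hs : s ∈ T) (hps : 0 ≤ p s) (hp : ∀ x ∈ T.erase s, p x ∈ Set.Icc 0 1) :
    p s / (1 + ∑ x ∈ T.erase s, p x) ≤
      ∑ Y ∈ T.powerset with s ∈ Y, 1 / (#Y : K) * subsetWeight p T Y := by
  have natCast_mem (n : ℕ) : (n : K) ∈ Set.Ioi (-1) :=
    neg_one_lt_zero.trans_le n.cast_nonneg
  have card_insert_eq {Z : Finset X} (hZ : Z ∈ (T.erase s).powerset) :
      (#(insert s Z) : K) = 1 + #Z := by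
    rw [card_insert_of_notMem fun h ↦ notMem_erase s T (mem_powerset.mp hZ h), Nat.cast_add_one,
      add_comm]
  calc p s / (1 + ∑ x ∈ T.erase s, p x)
      = p s * (1 / (1 + ∑ x ∈ T.erase s, p x)) := (mul_one_div _ _).symm
    _ ≤ p s * ∑ Z ∈ (T.erase s).powerset, subsetWeight p (T.erase s) Z * (1 / (1 + (#Z : K))) :=
        mul_le_mul_of_nonneg_left (map_sum_le_sum_powerset_subsetWeight_mul_map_card hp
          (convexOn_one_div_add 1) fun n _ ↦ natCast_mem n) hps
    _ = p s * ∑ Z ∈ (T.erase s).powerset,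
          1 / (#(insert s Z) : K) * subsetWeight p (T.erase s) Z := by
        congr 1
        exact sum_congr rfl fun Z hZ ↦ by rw [card_insert_eq hZ, mul_comm]
    _ = ∑ Y ∈ T.powerset with s ∈ Y, 1 / (#Y : K) * subsetWeight p T Y :=
        (sum_powerset_filter_mem_mul_subsetWeight p hs fun Y ↦ 1 / (#Y : K)).symm

end LinearOrderedField

/-- For a random subset `Y` of `𝒳` formed by independently including
each `x` with probability `p x`, the expectation of `1/|Y|` restricted to the event
`s ∈ Y` is at least `p s / (1 + Σ_{x ≠ s} p x)`. -/
theorem random_subset_uniform_output_bound (X : Type) [Fintype X] [DecidableEq X]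
    (p : X → ℝ) (hp : ∀ x, p x ∈ Set.Icc (0 : ℝ) 1) (s : X) :
    p s / (1 + ∑ x ∈ Finset.univ.erase s, p x)
      ≤ ∑ Y ∈ Finset.univ.filter (fun Y : Finset X => s ∈ Y),
          (1 / (Y.card : ℝ)) * ((∏ x ∈ Y, p x) * ∏ x ∈ Yᶜ, (1 - p x)) := by
  simpa only [powerset_univ, subsetWeight, ← compl_eq_univ_sdiff] using
    random_subset_uniform_output_bound_general (mem_univ s) (hp s).1 fun x _ ↦ hp x
end

section
/- Let ℓ : ℕ → ℕ and let (β_t)_{t∈ℕ} be a countable family, where each β_t assigns to every n ∈ ℕ a function β_{t,n} : {0,1}^{ℓ(n)} → [0,1]. Then there exists an ℓ-sequence (s_n)_{n∈ℕ} such that for every t ∈ ℕ and every n ≥ t, β_{t,n}(s_n) ≤ (n + 2) · 2^{−ℓ(n)} · (1 + Σ_{x∈{0,1}^{ℓ(n)}} β_{t,n}(x)); equivalently, β_{t,n}(s_n) ≤ (n + 2) · (2^{−ℓ(n)} + E_{x←{0,1}^{ℓ(n)}} β_{t,n}(x)). -/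
/-!
Divide each of the finitely many functions `β t n`, `t ≤ n`, by its mean; one of mean zero vanishes
identically and imposes no constraint. The sum of these `n + 1` normalized functions has mean at
most `n + 1`, so at some point `s n` it is at most `n + 1`. By nonnegativity the same bound then
holds there for every single summand.
-/

open scoped BigOperators

theorem expect_bool_pi_eq_inv_two_pow_mul_sum {K : Type*} [Semifield K] [CharZero K] {m : ℕ}
    (f : (Fin m → Bool) → K) : 𝔼 x, f x = (2 ^ m)⁻¹ * ∑ x, f x := by
  simp [Fintype.expect_eq_sum_div_card, div_eq_inv_mul]

section ExpectBounds

variable {ι α K : Type*} [Field K] [LinearOrder K] [IsStrictOrderedRing K]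

-- Equality fails exactly when the mean is `0`, where division by zero makes the left side `0`.
theorem expect_div_expect_le_one (A : Finset α) (f : α → K) :
    𝔼 x ∈ A, f x / (𝔼 y ∈ A, f y) ≤ 1 := by
  rw [← Finset.expect_div]
  exact div_self_le_one _

theorem le_mul_expect_of_div_expect_le {A : Finset α} {f : α → K} {x : α} {c : K}
    (hf : ∀ y ∈ A, 0 ≤ f y) (hx : x ∈ A) (h : f x / (𝔼 y ∈ A, f y) ≤ c) :
    f x ≤ c * 𝔼 y ∈ A, f y := by
  rcases (Finset.expect_nonneg hf).eq_or_lt with mean_zero | mean_pos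
  · have fx_zero : f x = 0 :=
      (Finset.expect_eq_zero_iff_of_nonneg hf).mp mean_zero.symm x hx
    rw [fx_zero, ← mean_zero, mul_zero]
  · exact (div_le_iff₀ mean_pos).mp h

theorem exists_sum_div_expect_le_card {A : Finset α} (hA : A.Nonempty) (T : Finset ι)
    (f : ι → α → K) :
    ∃ x ∈ A, ∑ t ∈ T, f t x / (𝔼 y ∈ A, f t y) ≤ (T.card : K) := by
  refine Finset.exists_le_of_expect_le hA ?_
  calc 𝔼 x ∈ A, ∑ t ∈ T, f t x / (𝔼 y ∈ A, f t y)
      = ∑ t ∈ T, 𝔼 x ∈ A, f t x / (𝔼 y ∈ A, f t y) := Finset.expect_sum_comm _ _ _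
    _ ≤ ∑ _t ∈ T, 1 := Finset.sum_le_sum fun t _ => expect_div_expect_le_one A (f t)
    _ = T.card := by rw [Finset.sum_const, nsmul_one]

theorem exists_forall_le_card_mul_expect {A : Finset α} (hA : A.Nonempty) (T : Finset ι)
    {f : ι → α → K} (hf : ∀ t ∈ T, ∀ x ∈ A, 0 ≤ f t x) :
    ∃ x ∈ A, ∀ t ∈ T, f t x ≤ T.card * 𝔼 y ∈ A, f t y := by
  obtain ⟨x, hx, sum_le⟩ := exists_sum_div_expect_le_card hA T f
  refine ⟨x, hx, fun t ht => le_mul_expect_of_div_expect_le (hf t ht) hx ?_⟩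
  have normalized_nonneg : ∀ u ∈ T, 0 ≤ f u x / (𝔼 y ∈ A, f u y) := fun u hu =>
    div_nonneg (hf u hu x hx) (Finset.expect_nonneg (hf u hu))
  exact (Finset.single_le_sum normalized_nonneg ht).trans sum_le

theorem mul_expect_le_mul_inv_two_pow_mul_one_add_sum {m : ℕ} {f : (Fin m → Bool) → K}
    (hf : ∀ x, 0 ≤ f x) {a b : K} (hb : 0 ≤ b) (hab : a ≤ b) :
    a * 𝔼 x, f x ≤ b * (2 ^ m)⁻¹ * (1 + ∑ x, f x) := by
  have sum_nonneg : 0 ≤ ∑ x, f x := Finset.sum_nonneg fun x _ => hf x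
  calc a * 𝔼 x, f x = a * ((2 ^ m)⁻¹ * ∑ x, f x) := by
        rw [expect_bool_pi_eq_inv_two_pow_mul_sum]
    _ ≤ b * ((2 ^ m)⁻¹ * (1 + ∑ x, f x)) := by
        gcongr
        exact le_add_of_nonneg_left zero_le_one
    _ = b * (2 ^ m)⁻¹ * (1 + ∑ x, f x) := (mul_assoc _ _ _).symm

theorem derandomize_on_ingenerable_general {X : ℕ → Type*} [∀ n, Fintype (X n)]
    [∀ n, Nonempty (X n)] (β : ℕ → ∀ n, X n → K) (hβ : ∀ t n x, 0 ≤ β t n x) :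
    ∃ s : ∀ n, X n, ∀ t n : ℕ, t ≤ n → β t n (s n) ≤ ((n : K) + 1) * 𝔼 x, β t n x := by
  have exists_point (n : ℕ) := exists_forall_le_card_mul_expect (Finset.univ_nonempty (α := X n))
    (Finset.Iic n) (f := fun t => β t n) fun t _ x _ => hβ t n x
  choose s _ hs using exists_point
  refine ⟨s, fun t n htn => ?_⟩
  simpa only [Nat.card_Iic, Nat.cast_add_one] using hs n t (Finset.mem_Iic.mpr htn)

end ExpectBounds

/-- Derandomization by diagonalization: for any countable family of
`[0,1]`-valued functions `β t n` on `{0,1}^{ℓ n}`, there is a fixed `ℓ`-sequence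
`s` such that for all `t` and all `n ≥ t`,
`β t n (s n) ≤ (n+2) · 2^{-ℓ n} · (1 + Σ_x β t n x)`. -/
theorem derandomize_on_ingenerable (ℓ : ℕ → ℕ)
    (β : ℕ → ∀ n : ℕ, (Fin (ℓ n) → Bool) → ℝ)
    (hβ : ∀ t n x, β t n x ∈ Set.Icc (0 : ℝ) 1) :
    ∃ s : ∀ n : ℕ, Fin (ℓ n) → Bool, ∀ t n : ℕ, t ≤ n →
      β t n (s n) ≤
        ((n : ℝ) + 2) * ((2 : ℝ) ^ ℓ n)⁻¹ * (1 + ∑ x : Fin (ℓ n) → Bool, β t n x) := by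
  obtain ⟨s, hs⟩ := derandomize_on_ingenerable_general β fun t n x => (hβ t n x).1
  exact ⟨s, fun t n htn => (hs t n htn).trans <|
    mul_expect_le_mul_inv_two_pow_mul_one_add_sum (fun x => (hβ t n x).1) (by positivity)
      (by linarith)⟩
end

section
/- Let ℓ : ℕ → ℕ be such that n ↦ 2^{−ℓ(n)} is negligible, and let (β_t)_{t∈ℕ} be a countable family, where each β_t assigns to every n ∈ ℕ a function β_{t,n} : {0,1}^{ℓ(n)} → [0,1]. Then there exists an ℓ-sequence (s_n)_{n∈ℕ} such that for every t ∈ ℕ the following holds: if the average n ↦ 2^{−ℓ(n)} · Σ_{x∈{0,1}^{ℓ(n)}} β_{t,n}(x) is negligible, then n ↦ β_{t,n}(s_n) is negligible. -/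
/-- A function `f : ℕ → ℝ` is negligible if for every `c`, `f n ≤ n⁻ᶜ` for all
sufficiently large `n`. -/
def Negligible (f : ℕ → ℝ) : Prop :=
  ∀ c : ℕ, ∃ N : ℕ, ∀ n ≥ N, f n ≤ 1 / (n : ℝ) ^ c

/-!
Normalise finitely many nonnegative random variables to have mean at most `1`. Their sum has mean
at most their number `k`, so at some point the sum, and hence each of its terms, is at most `k`:
there, every variable is at most `k` times its mean. Let `s n` be such a point for the first `n`
members of the family. Each member is among these for all large `n`, and the factor `n` lost along
the way does not affect negligibility.
-/

section

open Filter MeasureTheory ProbabilityTheory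

namespace Negligible

theorem mono {f g : ℕ → ℝ} (hg : Negligible g) (hfg : f ≤ᶠ[atTop] g) : Negligible f := by
  intro c
  obtain ⟨N, hN⟩ := hg c
  obtain ⟨M, hM⟩ := eventually_atTop.1 hfg
  exact ⟨max N M, fun n hn ↦
    (hM n (le_of_max_le_right hn)).trans (hN n (le_of_max_le_left hn))⟩

theorem natCast_pow_mul {f : ℕ → ℝ} (hf : Negligible f) (k : ℕ) :
    Negligible fun n ↦ (n : ℝ) ^ k * f n := by
  intro c
  obtain ⟨N, hN⟩ := hf (k + c)
  refine ⟨max N 1, fun n hn ↦ ?_⟩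
  have n_pos : (0 : ℝ) < n := Nat.cast_pos.2 (le_of_max_le_right hn)
  calc (n : ℝ) ^ k * f n ≤ n ^ k * (1 / n ^ (k + c)) := by
        gcongr
        exact hN n (le_of_max_le_left hn)
    _ = 1 / n ^ c := by
        rw [pow_add]
        field_simp

end Negligible

theorem integral_uniformOn_univ {Ω : Type*} [Fintype Ω] [MeasurableSpace Ω]
    [MeasurableSingletonClass Ω] (f : Ω → ℝ) :
    ∫ x, f x ∂uniformOn Set.univ = (Fintype.card Ω : ℝ)⁻¹ * ∑ x, f x := by
  rw [integral_fintype .of_finite, Finset.mul_sum]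
  simp [measureReal_def, uniformOn_univ]

theorem exists_forall_le_card_mul_integral {Ω ι : Type*} [MeasurableSpace Ω] {μ : Measure Ω}
    [IsProbabilityMeasure μ] {T : Finset ι} {f : ι → Ω → ℝ}
    (hf : ∀ i ∈ T, Integrable (f i) μ) (hf_nonneg : ∀ i ∈ T, 0 ≤ᵐ[μ] f i) :
    ∃ x, ∀ i ∈ T, f i x ≤ T.card * ∫ y, f i y ∂μ := by
  have integrable_normalized : ∀ i ∈ T, Integrable (fun x ↦ f i x / ∫ y, f i y ∂μ) μ :=
    fun i hi ↦ (hf i hi).div_const _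
  have integral_sum_le : ∫ x, ∑ i ∈ T, f i x / ∫ y, f i y ∂μ ∂μ ≤ T.card := by
    rw [integral_finsetSum T integrable_normalized, Finset.cast_card]
    gcongr with i
    rw [integral_div]
    exact div_self_le_one _
  have ae_nonneg : ∀ᵐ x ∂μ, ∀ i ∈ T, 0 ≤ f i x := (eventually_all_finset T).2 hf_nonneg
  -- Division by a zero mean gives `0`, so the normalised sum says nothing about such terms.
  have ae_eq_zero : ∀ᵐ x ∂μ, ∀ i ∈ T, ∫ y, f i y ∂μ = 0 → f i x = 0 :=
    (eventually_all_finset T).2 fun i hi ↦ eventually_imp_distrib_left.2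
      (integral_eq_zero_iff_of_nonneg_ae (hf_nonneg i hi) (hf i hi)).1
  obtain ⟨x, hx, sum_le⟩ := exists_notMem_null_le_integral
    (integrable_finsetSum T integrable_normalized) (ae_iff.1 (ae_nonneg.and ae_eq_zero))
  obtain ⟨nonneg, eq_zero⟩ := not_not.1 hx
  have integral_nonneg : ∀ i ∈ T, 0 ≤ ∫ y, f i y ∂μ :=
    fun i hi ↦ integral_nonneg_of_ae (hf_nonneg i hi)
  refine ⟨x, fun i hi ↦ ?_⟩
  obtain integral_zero | integral_pos := (integral_nonneg i hi).eq_or_lt'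
  · simp [integral_zero, eq_zero i hi integral_zero]
  · rw [← div_le_iff₀ integral_pos]
    calc f i x / ∫ y, f i y ∂μ ≤ ∑ j ∈ T, f j x / ∫ y, f j y ∂μ :=
          Finset.single_le_sum (f := fun j ↦ f j x / ∫ y, f j y ∂μ)
            (fun j hj ↦ div_nonneg (nonneg j hj) (integral_nonneg j hj)) hi
      _ ≤ T.card := sum_le.trans integral_sum_le

section CountableFamily

variable {Ω : ℕ → Type*} [∀ n, MeasurableSpace (Ω n)] {μ : ∀ n, Measure (Ω n)}
  [∀ n, IsProbabilityMeasure (μ n)] {ι : Type*} [Countable ι] {β : ι → ∀ n, Ω n → ℝ}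

theorem exists_forall_eventually_le_natCast_mul_integral
    (hβ : ∀ t n, Integrable (β t n) (μ n)) (hβ_nonneg : ∀ t n, 0 ≤ᵐ[μ n] β t n) :
    ∃ s : ∀ n, Ω n, ∀ t, ∀ᶠ n : ℕ in atTop, β t n (s n) ≤ n * ∫ x, β t n x ∂μ n := by
  obtain ⟨e, he⟩ := exists_injective_nat ι
  let T (n : ℕ) : Finset ι := (Finset.range n).preimage e he.injOn
  have card_T_le (n : ℕ) : (T n).card ≤ n := by
    simpa using Finset.card_le_card_of_injOn (s := T n) (t := Finset.range n) e
      (fun t ht ↦ Finset.mem_preimage.1 ht) he.injOn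
  choose s hs using fun n ↦ exists_forall_le_card_mul_integral (T := T n)
    (fun t _ ↦ hβ t n) (fun t _ ↦ hβ_nonneg t n)
  refine ⟨s, fun t ↦ ?_⟩
  filter_upwards [eventually_gt_atTop (e t)] with n hn
  have ht : t ∈ T n := Finset.mem_preimage.2 (Finset.mem_range.2 hn)
  have integral_nonneg : 0 ≤ ∫ x, β t n x ∂μ n := integral_nonneg_of_ae (hβ_nonneg t n)
  calc β t n (s n) ≤ (T n).card * ∫ x, β t n x ∂μ n := hs n t ht
    _ ≤ n * ∫ x, β t n x ∂μ n := by
        gcongr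
        exact card_T_le n

theorem derandomize_negligible_general
    (hβ : ∀ t n, Integrable (β t n) (μ n)) (hβ_nonneg : ∀ t n, 0 ≤ᵐ[μ n] β t n) :
    ∃ s : ∀ n, Ω n, ∀ t,
      Negligible (fun n ↦ ∫ x, β t n x ∂μ n) → Negligible (fun n ↦ β t n (s n)) := by
  obtain ⟨s, hs⟩ := exists_forall_eventually_le_natCast_mul_integral hβ hβ_nonneg
  refine ⟨s, fun t ht ↦ (ht.natCast_pow_mul 1).mono ?_⟩
  simpa only [EventuallyLE, pow_one] using hs t

end CountableFamily

end

/-- If `2^{-ℓ}` is negligible, then for any countable family of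
`[0,1]`-valued functions `β t n` on `{0,1}^{ℓ n}` there is a fixed `ℓ`-sequence `s`
such that, for every `t`, negligible average success on uniformly random inputs
implies negligible success on the fixed inputs `s n`. -/
theorem derandomize_negligible (ℓ : ℕ → ℕ)
    (hℓ : Negligible fun n => ((2 : ℝ) ^ ℓ n)⁻¹)
    (β : ℕ → ∀ n : ℕ, (Fin (ℓ n) → Bool) → ℝ)
    (hβ : ∀ t n x, β t n x ∈ Set.Icc (0 : ℝ) 1) :
    ∃ s : ∀ n : ℕ, Fin (ℓ n) → Bool, ∀ t : ℕ,
      Negligible (fun n => ((2 : ℝ) ^ ℓ n)⁻¹ * ∑ x : Fin (ℓ n) → Bool, β t n x) →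
      Negligible (fun n => β t n (s n)) := by
  simpa [integral_uniformOn_univ] using derandomize_negligible_general (β := β)
    (μ := fun _ ↦ ProbabilityTheory.uniformOn Set.univ)
    (fun _ _ ↦ .of_finite) (fun t n ↦ .of_forall fun x ↦ (hβ t n x).1)
end

section
/- Let g : ℕ → ℕ be a map with g ∈ O(n^d) for some positive integer d. Then there exists a computable non-decreasing map f : ℕ → ℕ and a real number r > 0 (one may take r = 1/(2d)) such that g(f(n)) < n for all sufficiently large n, and f ∈ Ω(n^r) ∩ O(n^r), i.e., there exist constants k_1, k_2 > 0 with k_1 · n^r ≤ f(n) ≤ k_2 · n^r for all sufficiently large n. -/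
/-!
Take `f n = ⌊n ^ (1 / (2 * d))⌋`, the integer `2 * d`-th root of `n`. Since `g ∈ O(m ^ d)` and
`m ^ d ∈ o(m ^ (2 * d))`, substituting `m = f n → ∞` gives `g (f n) ∈ o(f n ^ (2 * d)) ⊆ o(n)`.
-/

open Filter Asymptotics

theorem primrec₂_nat_pow : Primrec₂ ((· ^ ·) : ℕ → ℕ → ℕ) :=
  Primrec₂.unpaired'.1 Nat.Primrec.pow

theorem nthRoot_le_add_one (e n : ℕ) : e.nthRoot n ≤ n + 1 := by
  rcases eq_or_ne e 0 with rfl | he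
  · simp
  · calc e.nthRoot n ≤ e.nthRoot n ^ e := Nat.le_self_pow he _
      _ ≤ n := Nat.pow_nthRoot_le (.inl he)
      _ ≤ n + 1 := n.le_succ

theorem nthRoot_eq_iff {e n m : ℕ} :
    e.nthRoot n = m ↔ e = 0 ∧ m = 1 ∨ e ≠ 0 ∧ m ^ e ≤ n ∧ n < (m + 1) ^ e := by
  rcases eq_or_ne e 0 with rfl | he
  · simp [eq_comm]
  · rw [← Nat.le_nthRoot_iff he, ← Nat.nthRoot_lt_iff he]
    omega

theorem primrec₂_nthRoot : Primrec₂ Nat.nthRoot := by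
  have exponent : Primrec fun x : (ℕ × ℕ) × ℕ => x.1.1 := Primrec.fst.comp Primrec.fst
  have radicand : Primrec fun x : (ℕ × ℕ) × ℕ => x.1.2 := Primrec.snd.comp Primrec.fst
  have root : Primrec fun x : (ℕ × ℕ) × ℕ => x.2 := Primrec.snd
  have exponent_eq_zero : PrimrecPred fun x : (ℕ × ℕ) × ℕ => x.1.1 = 0 :=
    Primrec.eq.comp exponent (Primrec.const 0)
  have root_eq_one : PrimrecPred fun x : (ℕ × ℕ) × ℕ => x.2 = 1 :=
    Primrec.eq.comp root (Primrec.const 1)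
  have pow_le : PrimrecPred fun x : (ℕ × ℕ) × ℕ => x.2 ^ x.1.1 ≤ x.1.2 :=
    Primrec.nat_le.comp (primrec₂_nat_pow.comp root exponent) radicand
  have lt_pow : PrimrecPred fun x : (ℕ × ℕ) × ℕ => x.1.2 < (x.2 + 1) ^ x.1.1 :=
    Primrec.nat_lt.comp radicand (primrec₂_nat_pow.comp (Primrec.succ.comp root) exponent)
  have bounded : Primrec.PrimrecBounded fun p : ℕ × ℕ => p.1.nthRoot p.2 :=
    ⟨fun p => p.2 + 1, Primrec.succ.comp Primrec.snd, fun p => nthRoot_le_add_one p.1 p.2⟩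
  have graph : PrimrecRel fun (p : ℕ × ℕ) (m : ℕ) => p.1.nthRoot p.2 = m :=
    ((exponent_eq_zero.and root_eq_one).or
      (exponent_eq_zero.not.and (pow_le.and lt_pow))).of_eq fun _ => nthRoot_eq_iff.symm
  exact Primrec.of_graph bounded graph

theorem monotone_nthRoot (e : ℕ) : Monotone e.nthRoot := by
  rcases eq_or_ne e 0 with rfl | he
  · exact monotone_const
  · exact fun m n hmn => (Nat.le_nthRoot_iff he).2 ((Nat.pow_nthRoot_le (.inl he)).trans hmn)

theorem tendsto_nthRoot_atTop {e : ℕ} (he : e ≠ 0) : Tendsto e.nthRoot atTop atTop :=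
  tendsto_atTop_atTop_of_monotone (monotone_nthRoot e) fun m =>
    ⟨m ^ e, (Nat.nthRoot_pow he m).ge⟩

theorem nthRoot_eq_floor_rpow_inv {e : ℕ} (he : e ≠ 0) (n : ℕ) :
    e.nthRoot n = ⌊(n : ℝ) ^ (e : ℝ)⁻¹⌋₊ := by
  refine eq_of_forall_le_iff fun m => ?_
  rw [Nat.le_nthRoot_iff he, Nat.le_floor_iff (by positivity),
    Real.le_rpow_inv_iff_of_pos m.cast_nonneg n.cast_nonneg (by positivity), Real.rpow_natCast]
  norm_cast

theorem nthRoot_le_rpow_inv {e : ℕ} (he : e ≠ 0) (n : ℕ) :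
    (e.nthRoot n : ℝ) ≤ (n : ℝ) ^ (e : ℝ)⁻¹ := by
  rw [nthRoot_eq_floor_rpow_inv he]
  exact Nat.floor_le (by positivity)

theorem rpow_inv_div_two_lt_nthRoot {e n : ℕ} (he : e ≠ 0) (hn : 1 ≤ n) :
    (n : ℝ) ^ (e : ℝ)⁻¹ / 2 < e.nthRoot n := by
  rw [nthRoot_eq_floor_rpow_inv he]
  exact Nat.div_two_lt_floor (Real.one_le_rpow (by exact_mod_cast hn) (by positivity))

theorem isLittleO_comp_nthRoot {E : Type*} [Norm E] {g : ℕ → E} {d e : ℕ}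
    (hde : d < e) (hg : g =O[atTop] fun n => (n : ℝ) ^ d) :
    (fun n => g (e.nthRoot n)) =o[atTop] fun n => (n : ℝ) := by
  have he : e ≠ 0 := Nat.ne_zero_of_lt hde
  have g_isLittleO : g =o[atTop] fun n => (n : ℝ) ^ e :=
    hg.trans_isLittleO <|
      (isLittleO_pow_pow_atTop_of_lt hde).comp_tendsto tendsto_natCast_atTop_atTop
  have nthRoot_pow_isBigO : (fun n => (e.nthRoot n : ℝ) ^ e) =O[atTop] fun n => (n : ℝ) := by
    refine isBigO_of_le _ fun n => ?_
    rw [Real.norm_of_nonneg (by positivity), Real.norm_of_nonneg n.cast_nonneg]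
    exact_mod_cast Nat.pow_nthRoot_le (.inl he)
  exact (g_isLittleO.comp_tendsto (tendsto_nthRoot_atTop he)).trans_isBigO nthRoot_pow_isBigO

/-- If `g ∈ O(n^d)` for a positive integer `d`, then there is a
computable non-decreasing map `f : ℕ → ℕ` and a real `r > 0` such that
`g (f n) < n` for all sufficiently large `n` and `f ∈ Ω(n^r) ∩ O(n^r)`. -/
theorem exists_slowdown (g : ℕ → ℕ) (d : ℕ) (hd : 0 < d)
    (hg : ∃ k : ℝ, 0 < k ∧ ∃ n₀ : ℕ, ∀ n ≥ n₀, (g n : ℝ) ≤ k * (n : ℝ) ^ d) :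
    ∃ (f : ℕ → ℕ) (r : ℝ), Computable f ∧ Monotone f ∧ 0 < r ∧
      (∃ N : ℕ, ∀ n ≥ N, g (f n) < n) ∧
      (∃ k₁ k₂ : ℝ, 0 < k₁ ∧ 0 < k₂ ∧ ∃ n₁ : ℕ, ∀ n ≥ n₁,
        k₁ * (n : ℝ) ^ r ≤ (f n : ℝ) ∧ (f n : ℝ) ≤ k₂ * (n : ℝ) ^ r) := by
  obtain ⟨k, -, n₀, hg⟩ := hg
  have g_isBigO : (fun n => (g n : ℝ)) =O[atTop] fun n => (n : ℝ) ^ d :=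
    .of_bound k <| (eventually_ge_atTop n₀).mono fun n hn => by simpa using hg n hn
  have he : 2 * d ≠ 0 := by omega
  have computable_root : Computable (Nat.nthRoot (2 * d)) :=
    (primrec₂_nthRoot.comp (Primrec.const (2 * d)) Primrec.id).to_comp
  have norm_pos : ∀ᶠ n : ℕ in atTop, 0 < ‖(n : ℝ)‖ :=
    (eventually_gt_atTop 0).mono fun n hn => by simpa using hn
  have comp_isLittleO : (fun n => (g (Nat.nthRoot (2 * d) n) : ℝ)) =o[atTop] fun n => (n : ℝ) :=
    isLittleO_comp_nthRoot (by omega) g_isBigO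
  have slow : ∀ᶠ n in atTop, g (Nat.nthRoot (2 * d) n) < n := by
    simpa only [Real.norm_natCast, Nat.cast_lt] using
      comp_isLittleO.eventuallyLT_norm_of_eventually_pos norm_pos
  refine ⟨Nat.nthRoot (2 * d), ((2 * d : ℕ) : ℝ)⁻¹, computable_root, monotone_nthRoot _,
    by positivity, eventually_atTop.1 slow, 1 / 2, 1, one_half_pos, one_pos, 1,
    fun n hn => ⟨?_, ?_⟩⟩
  · linarith [rpow_inv_div_two_lt_nthRoot he hn]
  · simpa using nthRoot_le_rpow_inv he n
end

section
/- Let n ∈ ℕ and let Φ be a quantum channel from n qubits to 2n qubits. Then 4^{−n} · Σ_{x∈{0,1}^n} Σ_{θ∈{0,1}^n} (⟨x^θ| ⊗ ⟨x^θ|) Φ(|x^θ⟩⟨x^θ|) (|x^θ⟩ ⊗ |x^θ⟩) ≤ (3/4)^n. In words: the expected fidelity, over a uniformly random Wiesner state on n qubits, between the output of any cloning channel and two perfect copies of the state is at most (3/4)^n. -/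
open scoped Matrix

/-- The amplitude of the single-qubit state `H^θᵢ |xᵢ⟩` at the basis state `|sᵢ⟩`. -/
noncomputable def qAmp (xi θi si : Bool) : ℂ :=
  if θi then ((1 / Real.sqrt 2 : ℝ) : ℂ) * (if xi && si then -1 else 1)
  else if si = xi then 1 else 0

/-- The Wiesner state `|x^θ⟩ = H^{θ₁}|x₁⟩ ⊗ ⋯ ⊗ H^{θₙ}|xₙ⟩` as a vector indexed by
computational basis strings. -/
noncomputable def wiesnerVec {n : ℕ} (x θ : Fin n → Bool) : (Fin n → Bool) → ℂ :=
  fun s => ∏ i : Fin n, qAmp (x i) (θ i) (s i)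

/-- The density matrix `|x^θ⟩⟨x^θ|` of a Wiesner state. -/
noncomputable def wiesnerDM {n : ℕ} (x θ : Fin n → Bool) :
    Matrix (Fin n → Bool) (Fin n → Bool) ℂ :=
  fun s s' => wiesnerVec x θ s * star (wiesnerVec x θ s')

/-- The two-fold tensor `v ⊗ v` of a vector on `n` qubits, as a vector on `2n` qubits. -/
noncomputable def pairVec {n : ℕ} (v : (Fin n → Bool) → ℂ) : (Fin (2 * n) → Bool) → ℂ :=
  fun s => v (fun i => s ⟨i.val, by have := i.isLt; omega⟩) *
    v (fun i => s ⟨n + i.val, by have := i.isLt; omega⟩)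

/-- The fidelity `⟨x^θ| ⊗ ⟨x^θ| Φ(|x^θ⟩⟨x^θ|) |x^θ⟩ ⊗ |x^θ⟩` of the output of the
channel with Kraus operators `K` on input `|x^θ⟩⟨x^θ|` with two perfect copies. -/
noncomputable def cloneFid {n m : ℕ}
    (K : Fin m → Matrix (Fin (2 * n) → Bool) (Fin n → Bool) ℂ)
    (x θ : Fin n → Bool) : ℝ :=
  (∑ s : Fin (2 * n) → Bool, ∑ s' : Fin (2 * n) → Bool,
    star (pairVec (wiesnerVec x θ) s) *
      (∑ i, K i * wiesnerDM x θ * (K i)ᴴ) s s' *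
      pairVec (wiesnerVec x θ) s').re

/-!
The fidelity of a Kraus operator `K` on `|x^θ⟩` is `|(⟨x^θ| ⊗ ⟨x^θ|) K |x^θ⟩|²`, the squared modulus
of a linear functional of the entries of `K`. Regrouping the `3n` qubits of the input and the two
copies into `n` triples, the functionals for all `(x, θ)` are the rows of the `n`-th tensor power of
a `4 × 8` matrix `W` with rows `(H^θ |x⟩)^{⊗ 3}`. The Gram matrix `W Wᴴ` has as entries the cubes of
the overlaps of the four states, and equals `1 + U / 2` with `U` unitary, so `‖W‖² ≤ 3 / 2`. As the
operator norm is submultiplicative under tensor products, the fidelities of `K` add up to at most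
`(3 / 2)ⁿ tr (Kᴴ K)`; for a channel these traces add up to `2ⁿ`, which gives `(3 / 4)ⁿ` after
averaging over the `4ⁿ` states.
-/

section OperatorNorm

open scoped Kronecker Matrix.Norms.L2Operator

variable {k l m n : Type*} [Fintype k] [Fintype l] [Fintype m] [Fintype n]
  [DecidableEq m] [DecidableEq n]

theorem sum_norm_sq_mulVec_le {𝕜 : Type*} [RCLike 𝕜] (A : Matrix l m 𝕜) (v : m → 𝕜) :
    ∑ i, ‖(A *ᵥ v) i‖ ^ 2 ≤ ‖A‖ ^ 2 * ∑ j, ‖v j‖ ^ 2 := by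
  have h := pow_le_pow_left₀ (norm_nonneg _) (A.l2_opNorm_mulVec (WithLp.toLp 2 v)) 2
  simpa [mul_pow, EuclideanSpace.norm_sq_eq] using h

theorem l2_opNorm_le_of_conjTranspose_mul_self_le {𝕜 : Type*} [RCLike 𝕜]
    {A : Matrix l m 𝕜} {c : ℝ} (hc : 0 ≤ c) (h : ‖Aᴴ * A‖ ≤ c ^ 2) : ‖A‖ ≤ c := by
  rw [Matrix.l2_opNorm_conjTranspose_mul_self, ← pow_two] at h
  exact le_of_sq_le_sq h hc

theorem l2_opNorm_submatrix_equiv_le (A : Matrix k m ℂ) (e : l ≃ k) (f : n ≃ m) :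
    ‖A.submatrix e f‖ ≤ ‖A‖ := by
  let reindex : Matrix m m ℂ →⋆ₐ[ℂ] Matrix n n ℂ :=
    { (Matrix.reindexAlgEquiv ℂ ℂ f.symm : Matrix m m ℂ →ₐ[ℂ] Matrix n n ℂ) with
      map_star' := fun B => by simp [Matrix.star_eq_conjTranspose] }
  refine l2_opNorm_le_of_conjTranspose_mul_self_le (norm_nonneg A) ?_
  calc ‖(A.submatrix e f)ᴴ * A.submatrix e f‖ = ‖reindex (Aᴴ * A)‖ := by
        rw [Matrix.conjTranspose_submatrix, Matrix.submatrix_mul_equiv]; rfl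
    _ ≤ ‖Aᴴ * A‖ := NonUnitalStarAlgHom.norm_apply_le reindex _
    _ = ‖A‖ ^ 2 := by rw [Matrix.l2_opNorm_conjTranspose_mul_self, pow_two]

theorem l2_opNorm_kronecker_one_le (A : Matrix m m ℂ) :
    ‖A ⊗ₖ (1 : Matrix n n ℂ)‖ ≤ ‖A‖ := by
  let amplify : Matrix m m ℂ →⋆ₙₐ[ℂ] Matrix (m × n) (m × n) ℂ :=
    { toFun := fun B => B ⊗ₖ 1
      map_smul' := fun c B => Matrix.smul_kronecker c B 1
      map_zero' := Matrix.zero_kronecker 1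
      map_add' := fun B C => Matrix.add_kronecker B C 1
      map_mul' := fun B C => by rw [← Matrix.mul_kronecker_mul, mul_one]
      map_star' := fun B => by
        simp [Matrix.star_eq_conjTranspose, Matrix.conjTranspose_kronecker] }
  exact NonUnitalStarAlgHom.norm_apply_le amplify A

theorem l2_opNorm_one_kronecker_le (A : Matrix n n ℂ) :
    ‖(1 : Matrix m m ℂ) ⊗ₖ A‖ ≤ ‖A‖ := by
  calc ‖(1 : Matrix m m ℂ) ⊗ₖ A‖
      = ‖(A ⊗ₖ (1 : Matrix m m ℂ)).submatrix (Equiv.prodComm m n) (Equiv.prodComm m n)‖ := by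
        congr 1; ext i j; exact mul_comm _ _
    _ ≤ ‖A ⊗ₖ (1 : Matrix m m ℂ)‖ := l2_opNorm_submatrix_equiv_le _ _ _
    _ ≤ ‖A‖ := l2_opNorm_kronecker_one_le A

theorem l2_opNorm_kronecker_le (A : Matrix k m ℂ) (B : Matrix l n ℂ) :
    ‖A ⊗ₖ B‖ ≤ ‖A‖ * ‖B‖ := by
  refine l2_opNorm_le_of_conjTranspose_mul_self_le (by positivity) ?_
  calc ‖(A ⊗ₖ B)ᴴ * (A ⊗ₖ B)‖ = ‖((Aᴴ * A) ⊗ₖ 1) * (1 ⊗ₖ (Bᴴ * B))‖ := by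
        rw [Matrix.conjTranspose_kronecker, ← Matrix.mul_kronecker_mul,
          ← Matrix.mul_kronecker_mul, mul_one, one_mul]
    _ ≤ ‖(Aᴴ * A) ⊗ₖ (1 : Matrix n n ℂ)‖ * ‖(1 : Matrix m m ℂ) ⊗ₖ (Bᴴ * B)‖ := norm_mul_le _ _
    _ ≤ ‖Aᴴ * A‖ * ‖Bᴴ * B‖ := by
        gcongr
        · exact l2_opNorm_kronecker_one_le _
        · exact l2_opNorm_one_kronecker_le _
    _ = (‖A‖ * ‖B‖) ^ 2 := by
        simp only [Matrix.l2_opNorm_conjTranspose_mul_self]; ring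

/-- The tensor product of a finite family of matrices; its rows and columns are indexed by tuples
holding one row, respectively column, index for each factor. -/
def piKronecker {ι R : Type*} [Fintype ι] [CommMonoid R] {α β : ι → Type*}
    (A : ∀ i, Matrix (α i) (β i) R) : Matrix (∀ i, α i) (∀ i, β i) R :=
  Matrix.of fun a b => ∏ i, A i (a i) (b i)

theorem piKronecker_succ {R : Type*} [CommMonoid R] {N : ℕ} {α β : Fin (N + 1) → Type*}
    (A : ∀ i, Matrix (α i) (β i) R) :
    piKronecker A = (A 0 ⊗ₖ piKronecker fun i : Fin N => A i.succ).submatrix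
      (Fin.consEquiv α).symm (Fin.consEquiv β).symm := by
  ext a b
  exact Fin.prod_univ_succ _

theorem l2_opNorm_piKronecker_le {N : ℕ} {α β : Fin N → Type*}
    [∀ i, Fintype (α i)] [∀ i, Fintype (β i)] [∀ i, DecidableEq (β i)]
    (A : ∀ i, Matrix (α i) (β i) ℂ) : ‖piKronecker A‖ ≤ ∏ i, ‖A i‖ := by
  induction N with
  | zero =>
    refine l2_opNorm_le_of_conjTranspose_mul_self_le (by simp) ?_
    have hone : (piKronecker A)ᴴ * piKronecker A = 1 := by
      ext a b
      simp [piKronecker, Matrix.mul_apply, Matrix.one_apply, Subsingleton.elim a b]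
    simp [hone]
  | succ N ih =>
    rw [piKronecker_succ, Fin.prod_univ_succ]
    calc _ ≤ ‖A 0 ⊗ₖ piKronecker fun i : Fin N => A i.succ‖ := l2_opNorm_submatrix_equiv_le _ _ _
      _ ≤ ‖A 0‖ * ‖piKronecker fun i : Fin N => A i.succ‖ := l2_opNorm_kronecker_le _ _
      _ ≤ ‖A 0‖ * ∏ i : Fin N, ‖A i.succ‖ := by gcongr; exact ih _

end OperatorNorm

section Kraus

variable {m n : Type*} [Fintype m] [Fintype n]

theorem star_dotProduct_mul_vecMulVec_mul_conjTranspose_mulVec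
    (K : Matrix m n ℂ) (v : n → ℂ) (w : m → ℂ) :
    star w ⬝ᵥ (K * Matrix.vecMulVec v (star v) * Kᴴ) *ᵥ w =
      ((‖star w ⬝ᵥ K *ᵥ v‖ ^ 2 : ℝ) : ℂ) := by
  have hconj : star v ᵥ* Kᴴ ⬝ᵥ w = star (star w ⬝ᵥ K *ᵥ v) := by
    rw [← Matrix.star_mulVec, Matrix.star_dotProduct, dotProduct_comm]
  rw [Matrix.mul_vecMulVec, Matrix.vecMulVec_mul, Matrix.vecMulVec_mulVec, hconj]
  simp [Complex.mul_conj, Complex.normSq_eq_norm_sq, mul_comm]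

theorem re_trace_conjTranspose_mul_self (K : Matrix m n ℂ) :
    (Kᴴ * K).trace.re = ∑ p, ‖K.vec p‖ ^ 2 := by
  rw [← Matrix.star_vec_dotProduct_vec]
  simp [dotProduct, Complex.conj_mul', ← Complex.ofReal_pow]

end Kraus

section SingleQubit

open scoped Matrix.Norms.L2Operator

theorem star_qAmp (x θ s : Bool) : star (qAmp x θ s) = qAmp x θ s := by
  cases x <;> cases θ <;> cases s <;> simp [qAmp]

theorem qAmp_true_mul_self (x s : Bool) : qAmp x true s * qAmp x true s = 1 / 2 := by
  have hsqrt : ((Real.sqrt 2 : ℝ) : ℂ) * (Real.sqrt 2 : ℝ) = 2 := by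
    rw [← Complex.ofReal_mul, Real.mul_self_sqrt zero_le_two, Complex.ofReal_ofNat]
  cases x <;> cases s <;> simp [qAmp, ← mul_inv, hsqrt]

theorem qAmp_true_symm (x y : Bool) : qAmp x true y = qAmp y true x := by
  simp [qAmp, Bool.and_comm]

theorem sum_qAmp_mul_qAmp (x y θ : Bool) :
    ∑ s, qAmp x θ s * qAmp y θ s = if x = y then 1 else 0 := by
  rcases eq_or_ne y x with rfl | hne
  · cases θ
    · simp [qAmp]
    · simp [qAmp_true_mul_self]
  · obtain rfl : y = !x := Bool.eq_not.mpr hne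
    cases x <;> cases θ <;> simp [qAmp]

theorem sum_qAmp_mul_qAmp_not (x y θ : Bool) :
    ∑ s, qAmp x θ s * qAmp y (!θ) s = qAmp x true y := by
  cases x <;> cases θ <;> cases y <;> simp [qAmp]

/-- The matrix whose row `(x, θ)` is the three-qubit state `(H^θ |x⟩)^{⊗ 3}`: one factor for the
state handed to the cloner and two for the copies it is tested against. -/
noncomputable def wiesnerTriple : Matrix (Bool × Bool) (Bool × Bool × Bool) ℂ :=
  Matrix.of fun a t => qAmp a.1 a.2 t.1 * (qAmp a.1 a.2 t.2.1 * qAmp a.1 a.2 t.2.2)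

/-- The unitary `H ⊗ X` on indices `(x, θ)`: the Hadamard matrix, with entries `qAmp x true y`, on
the bit `x`, and a flip of the basis bit `θ`. It is twice the off-diagonal part of the Gram matrix
of the rows of `wiesnerTriple`. -/
noncomputable def hadamardSwap : Matrix (Bool × Bool) (Bool × Bool) ℂ :=
  Matrix.of fun a b => if a.2 = b.2 then 0 else qAmp a.1 true b.1

theorem conjTranspose_hadamardSwap : hadamardSwapᴴ = hadamardSwap := by
  ext a b
  simp only [hadamardSwap, Matrix.conjTranspose_apply, Matrix.of_apply, apply_ite star, star_zero,
    star_qAmp, eq_comm (a := b.2), qAmp_true_symm b.1]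

theorem hadamardSwap_mul_self : hadamardSwap * hadamardSwap = 1 := by
  ext ⟨x, θ⟩ ⟨y, φ⟩
  rcases eq_or_ne φ θ with rfl | hne
  · have horth := sum_qAmp_mul_qAmp x y true
    simp only [qAmp_true_symm y] at horth
    cases φ <;>
      simpa [hadamardSwap, Matrix.mul_apply, Fintype.sum_prod_type, Matrix.one_apply] using horth
  · obtain rfl : φ = !θ := Bool.eq_not.mpr hne
    cases θ <;> simp [hadamardSwap, Matrix.mul_apply, Fintype.sum_prod_type]

theorem hadamardSwap_mem_unitary :
    hadamardSwap ∈ unitary (Matrix (Bool × Bool) (Bool × Bool) ℂ) := by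
  rw [Unitary.mem_iff, Matrix.star_eq_conjTranspose, conjTranspose_hadamardSwap]
  exact ⟨hadamardSwap_mul_self, hadamardSwap_mul_self⟩

theorem wiesnerTriple_mul_conjTranspose_apply (a b : Bool × Bool) :
    (wiesnerTriple * wiesnerTripleᴴ) a b = (∑ s, qAmp a.1 a.2 s * qAmp b.1 b.2 s) ^ 3 := by
  simp only [wiesnerTriple, Matrix.mul_apply, Matrix.conjTranspose_apply, Matrix.of_apply,
    star_mul', star_qAmp, Fintype.sum_prod_type, Fintype.sum_bool]
  ring

theorem wiesnerTriple_mul_conjTranspose :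
    wiesnerTriple * wiesnerTripleᴴ = 1 + (1 / 2 : ℂ) • hadamardSwap := by
  ext ⟨x, θ⟩ ⟨y, φ⟩
  rw [wiesnerTriple_mul_conjTranspose_apply]
  rcases eq_or_ne φ θ with rfl | hne
  · rw [sum_qAmp_mul_qAmp]
    simp [hadamardSwap, Matrix.one_apply]
  · obtain rfl : φ = !θ := Bool.eq_not.mpr hne
    rw [sum_qAmp_mul_qAmp_not]
    simp [hadamardSwap, pow_succ, qAmp_true_mul_self]

theorem l2_opNorm_wiesnerTriple_sq_le : ‖wiesnerTriple‖ ^ 2 ≤ 3 / 2 := by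
  calc ‖wiesnerTriple‖ ^ 2 = ‖wiesnerTriple * wiesnerTripleᴴ‖ := by
        rw [← Matrix.l2_opNorm_conjTranspose, pow_two,
          ← Matrix.l2_opNorm_conjTranspose_mul_self, Matrix.conjTranspose_conjTranspose]
    _ ≤ ‖(1 : Matrix (Bool × Bool) (Bool × Bool) ℂ)‖ + ‖(1 / 2 : ℂ) • hadamardSwap‖ := by
        rw [wiesnerTriple_mul_conjTranspose]
        exact norm_add_le _ _
    _ = 3 / 2 := by
        rw [norm_smul, CStarRing.norm_of_mem_unitary hadamardSwap_mem_unitary, CStarRing.norm_one]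
        norm_num

end SingleQubit

section Wiesner

variable {n : ℕ}

theorem star_wiesnerVec (x θ : Fin n → Bool) : star (wiesnerVec x θ) = wiesnerVec x θ := by
  ext s
  simp only [wiesnerVec, Pi.star_apply, star_prod, star_qAmp]

theorem star_pairVec (v : (Fin n → Bool) → ℂ) : star (pairVec v) = pairVec (star v) := by
  ext s
  simp only [pairVec, Pi.star_apply, star_mul']

theorem wiesnerDM_eq_vecMulVec (x θ : Fin n → Bool) :
    wiesnerDM x θ = Matrix.vecMulVec (wiesnerVec x θ) (star (wiesnerVec x θ)) := rfl

theorem cloneFid_eq_sum_norm_sq {m : ℕ}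
    (K : Fin m → Matrix (Fin (2 * n) → Bool) (Fin n → Bool) ℂ) (x θ : Fin n → Bool) :
    cloneFid K x θ = ∑ i, ‖pairVec (wiesnerVec x θ) ⬝ᵥ K i *ᵥ wiesnerVec x θ‖ ^ 2 := by
  have hstar : star (pairVec (wiesnerVec x θ)) = pairVec (wiesnerVec x θ) := by
    rw [star_pairVec, star_wiesnerVec]
  calc cloneFid K x θ
      = (star (pairVec (wiesnerVec x θ)) ⬝ᵥ
          (∑ i, K i * wiesnerDM x θ * (K i)ᴴ) *ᵥ pairVec (wiesnerVec x θ)).re := by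
        simp only [cloneFid, dotProduct, Matrix.mulVec, Finset.mul_sum, mul_assoc, Pi.star_apply]
    _ = ∑ i, ‖star (pairVec (wiesnerVec x θ)) ⬝ᵥ K i *ᵥ wiesnerVec x θ‖ ^ 2 := by
        simp only [Matrix.sum_mulVec, dotProduct_sum, wiesnerDM_eq_vecMulVec, Complex.re_sum,
          star_dotProduct_mul_vecMulVec_mul_conjTranspose_mulVec, Complex.ofReal_re]
    _ = ∑ i, ‖pairVec (wiesnerVec x θ) ⬝ᵥ K i *ᵥ wiesnerVec x θ‖ ^ 2 := by rw [hstar]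

/-- The regrouping of the input register and the two output registers of a cloner, of `n` qubits
each, into `n` blocks; the `i`-th block holds the `i`-th qubit of the input, of the first copy and
of the second copy. -/
def tripleEquiv (n : ℕ) :
    (Fin n → Bool) × (Fin (2 * n) → Bool) ≃ (Fin n → Bool × Bool × Bool) :=
  ((Equiv.refl _).prodCongr <|
    ((finCongr (two_mul n)).arrowCongr (Equiv.refl Bool)).trans <|
      (Fin.appendEquiv n n).symm.trans (Equiv.arrowProdEquivProdArrow _ _ _).symm).trans
    (Equiv.arrowProdEquivProdArrow _ _ _).symm

theorem tripleEquiv_apply (t : Fin n → Bool) (s : Fin (2 * n) → Bool) (i : Fin n) :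
    tripleEquiv n (t, s) i =
      (t i, s ⟨i, by have := i.isLt; omega⟩, s ⟨n + i, by have := i.isLt; omega⟩) := rfl

theorem piKronecker_wiesnerTriple_tripleEquiv (x θ t : Fin n → Bool) (s : Fin (2 * n) → Bool) :
    piKronecker (fun _ => wiesnerTriple) (fun i => (x i, θ i)) (tripleEquiv n (t, s)) =
      wiesnerVec x θ t * pairVec (wiesnerVec x θ) s := by
  simp only [piKronecker, wiesnerTriple, Matrix.of_apply, tripleEquiv_apply, pairVec, wiesnerVec,
    Finset.prod_mul_distrib]

theorem pairVec_dotProduct_mulVec_wiesnerVec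
    (K : Matrix (Fin (2 * n) → Bool) (Fin n → Bool) ℂ) (x θ : Fin n → Bool) :
    pairVec (wiesnerVec x θ) ⬝ᵥ K *ᵥ wiesnerVec x θ =
      (piKronecker (fun _ => wiesnerTriple) *ᵥ (K.vec ∘ (tripleEquiv n).symm))
        fun i => (x i, θ i) := by
  simp only [Matrix.mulVec, dotProduct]
  rw [← (tripleEquiv n).sum_comp, Fintype.sum_prod_type_right]
  refine Finset.sum_congr rfl fun s _ => ?_
  rw [Finset.mul_sum]
  refine Finset.sum_congr rfl fun t _ => ?_
  rw [piKronecker_wiesnerTriple_tripleEquiv, Function.comp_apply, Equiv.symm_apply_apply,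
    Matrix.vec]
  ring

open scoped Matrix.Norms.L2Operator in
theorem l2_opNorm_piKronecker_wiesnerTriple_sq_le :
    ‖piKronecker fun _ : Fin n => wiesnerTriple‖ ^ 2 ≤ (3 / 2) ^ n := by
  calc ‖piKronecker fun _ : Fin n => wiesnerTriple‖ ^ 2 ≤ (∏ _ : Fin n, ‖wiesnerTriple‖) ^ 2 := by
        gcongr; exact l2_opNorm_piKronecker_le _
    _ = (‖wiesnerTriple‖ ^ 2) ^ n := by
        rw [Finset.prod_const, Finset.card_univ, Fintype.card_fin, pow_right_comm]
    _ ≤ (3 / 2) ^ n := by gcongr; exact l2_opNorm_wiesnerTriple_sq_le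

theorem sum_norm_sq_pairVec_dotProduct_mulVec_wiesnerVec_le
    (K : Matrix (Fin (2 * n) → Bool) (Fin n → Bool) ℂ) :
    ∑ x : Fin n → Bool, ∑ θ : Fin n → Bool,
      ‖pairVec (wiesnerVec x θ) ⬝ᵥ K *ᵥ wiesnerVec x θ‖ ^ 2 ≤
        (3 / 2) ^ n * (Kᴴ * K).trace.re := by
  let W : Matrix (Fin n → Bool × Bool) (Fin n → Bool × Bool × Bool) ℂ :=
    piKronecker fun _ => wiesnerTriple
  let u := K.vec ∘ (tripleEquiv n).symm
  calc _ = ∑ a, ‖(W *ᵥ u) a‖ ^ 2 := by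
        rw [← (Equiv.arrowProdEquivProdArrow (Fin n) (fun _ => Bool) fun _ => Bool).symm.sum_comp,
          Fintype.sum_prod_type]
        simp only [pairVec_dotProduct_mulVec_wiesnerVec]
        rfl
    _ ≤ (3 / 2) ^ n * ∑ t, ‖u t‖ ^ 2 := by
        refine (sum_norm_sq_mulVec_le W u).trans ?_
        gcongr
        exact l2_opNorm_piKronecker_wiesnerTriple_sq_le
    _ = (3 / 2) ^ n * (Kᴴ * K).trace.re := by
        rw [re_trace_conjTranspose_mul_self, ← (tripleEquiv n).symm.sum_comp]
        rfl

end Wiesner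

theorem wiesner_cloning_bound_general (n m : ℕ)
    (K : Fin m → Matrix (Fin (2 * n) → Bool) (Fin n → Bool) ℂ) :
    ((4 : ℝ) ^ n)⁻¹ * ∑ x : Fin n → Bool, ∑ θ : Fin n → Bool, cloneFid K x θ ≤
      (3 / 8 : ℝ) ^ n * (∑ i, (K i)ᴴ * K i).trace.re := by
  have hsum : ∑ x : Fin n → Bool, ∑ θ : Fin n → Bool, cloneFid K x θ ≤
      (3 / 2) ^ n * (∑ i, (K i)ᴴ * K i).trace.re := by
    simp only [cloneFid_eq_sum_norm_sq, Matrix.trace_sum, Complex.re_sum, Finset.mul_sum]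
    rw [Finset.sum_congr rfl fun x _ => Finset.sum_comm, Finset.sum_comm]
    exact Finset.sum_le_sum fun i _ =>
      sum_norm_sq_pairVec_dotProduct_mulVec_wiesnerVec_le (K i)
  calc _ ≤ ((4 : ℝ) ^ n)⁻¹ * ((3 / 2) ^ n * (∑ i, (K i)ᴴ * K i).trace.re) := by gcongr
    _ = (3 / 8 : ℝ) ^ n * (∑ i, (K i)ᴴ * K i).trace.re := by
        rw [← mul_assoc, ← inv_pow, ← mul_pow]; norm_num

/-- For any quantum channel `Φ` (given by Kraus operators `K`) from
`n` qubits to `2n` qubits, the expected fidelity over a uniformly random Wiesner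
state between `Φ(|x^θ⟩⟨x^θ|)` and two perfect copies `|x^θ⟩ ⊗ |x^θ⟩` is at most
`(3/4)^n`. -/
theorem wiesner_cloning_bound (n m : ℕ)
    (K : Fin m → Matrix (Fin (2 * n) → Bool) (Fin n → Bool) ℂ)
    (hK : ∑ i, (K i)ᴴ * K i = 1) :
    ((4 : ℝ) ^ n)⁻¹ *
      ∑ x : Fin n → Bool, ∑ θ : Fin n → Bool, cloneFid K x θ ≤ (3 / 4 : ℝ) ^ n := by
  refine (wiesner_cloning_bound_general n m K).trans_eq ?_
  rw [hK, Matrix.trace_one, Complex.natCast_re, Fintype.card_fun]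
  norm_num [← mul_pow]
end

section
/- Let ℓ : ℕ → ℕ be a map that is not in O(log), i.e., for every constant C > 0 there are infinitely many n with ℓ(n) > C · log n. Let ℱ be a countable set of sequences μ = (μ_n)_{n∈ℕ}, where μ_n is a subprobability distribution on {0,1}^{ℓ(n)}, and assume ℱ contains the sequence of point masses at the all-zero strings (i.e., the sequence μ⁰ with μ⁰_n(0^{ℓ(n)}) = 1). Call an ℓ-sequence (s_n)_{n∈ℕ} ℱ-ingenerable if there exists a polynomial p such that for every μ ∈ ℱ, μ_n(s_n) < p(n) · 2^{−ℓ(n)} for all sufficiently large n; call it weakly ℱ-ingenerable if there exists a polynomial p such that for every μ ∈ ℱ, μ_n(s_n) < p(n) · 2^{−ℓ(n)} for infinitely many n. Then there exists an ℓ-sequence that is weakly ℱ-ingenerable but not ℱ-ingenerable. -/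
/-!
Diagonalizing against an enumeration of `ℱ` with a union bound over its first `n` members at stage
`n` gives an `ℱ`-ingenerable sequence `d`, while the all-zero sequence `t` is not `ℱ`-ingenerable,
because `2 ^ ℓ n` exceeds every polynomial in `n` infinitely often. Interleave `d` and `t` by parity
in the two possible ways. Both results agree with `d` infinitely often, so both are weakly
`ℱ`-ingenerable. They cannot both be `ℱ`-ingenerable: every term of `t` occurs in one of the two, so
a common polynomial bound for them would be one for `t`. This avoids deciding on which parity class
`ℓ` outgrows the logarithm.
-/

open Filter Polynomial

theorem eventually_eval_lt_pow {𝕜 : Type*} [NormedField 𝕜] [LinearOrder 𝕜]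
    [IsStrictOrderedRing 𝕜] [OrderTopology 𝕜] {p : 𝕜[X]} {k : ℕ} (hk : p.degree < k) :
    ∀ᶠ x : 𝕜 in atTop, p.eval x < x ^ k := by
  have hratio : Tendsto (fun x : 𝕜 => p.eval x / (X ^ k : 𝕜[X]).eval x) atTop (nhds 0) :=
    p.div_tendsto_atTop_zero_of_degree_lt (X ^ k) (by rwa [degree_X_pow])
  filter_upwards [hratio.eventually_lt_const one_pos, eventually_gt_atTop 0] with x hx hpos
  rwa [eval_pow, eval_X, div_lt_one (pow_pos hpos k)] at hx

theorem frequently_eval_lt_pow {ℓ : ℕ → ℕ} {b : ℝ} (hb : 1 < b)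
    (hℓ : ∀ C : ℝ, 0 < C → ∃ᶠ n : ℕ in atTop, C * Real.log n < ℓ n) (p : ℝ[X]) :
    ∃ᶠ n : ℕ in atTop, p.eval (n : ℝ) < b ^ ℓ n := by
  have hlogb : 0 < Real.log b := Real.log_pos hb
  obtain ⟨k, hdeg, hk⟩ : ∃ k : ℕ, p.degree < k ∧ 0 < k :=
    ⟨p.natDegree + 1, degree_le_natDegree.trans_lt (Nat.cast_lt.2 (Nat.lt_succ_self _)),
      Nat.succ_pos _⟩
  have heval : ∀ᶠ n : ℕ in atTop, p.eval (n : ℝ) < (n : ℝ) ^ k :=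
    tendsto_natCast_atTop_atTop.eventually (eventually_eval_lt_pow hdeg)
  refine ((hℓ (k / Real.log b) (by positivity)).and_eventually
    (heval.and (eventually_gt_atTop 0))).mono ?_
  rintro n ⟨hlog, hlt, hn⟩
  have hn' : (0 : ℝ) < n := Nat.cast_pos.2 hn
  refine hlt.trans ((Real.log_lt_log_iff (pow_pos hn' k) (by positivity)).1 ?_)
  rwa [Real.log_pow, Real.log_pow, ← div_lt_iff₀ hlogb, mul_div_right_comm]

theorem exists_forall_eval_le_and_eval_le (p q : ℝ[X]) :
    ∃ r : ℝ[X], ∀ x, p.eval x ≤ r.eval x ∧ q.eval x ≤ r.eval x := by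
  refine ⟨p ^ 2 + q ^ 2 + 1, fun x => ?_⟩
  simp only [eval_add, eval_pow, eval_one]
  constructor <;> nlinarith [sq_nonneg (p.eval x - 1), sq_nonneg (q.eval x - 1)]

/-- A subprobability distribution on a finite type, given by its real-valued mass function. -/
def IsSubprobability {β : Type*} [Fintype β] (μ : β → ℝ) : Prop :=
  (∀ x, 0 ≤ μ x) ∧ ∑ x, μ x ≤ 1

theorem exists_forall_mem_le_card_div_card {β ι : Type*} [Fintype β] [Nonempty β]
    (I : Finset ι) {μ : ι → β → ℝ} (hμ : ∀ i ∈ I, IsSubprobability (μ i)) :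
    ∃ x, ∀ i ∈ I, μ i x ≤ (I.card : ℝ) / Fintype.card β := by
  have htotal : ∑ x, ∑ i ∈ I, μ i x ≤ ∑ _x : β, (I.card : ℝ) / Fintype.card β :=
    calc ∑ x, ∑ i ∈ I, μ i x = ∑ i ∈ I, ∑ x, μ i x := Finset.sum_comm
      _ ≤ ∑ _i ∈ I, (1 : ℝ) := Finset.sum_le_sum fun i hi => (hμ i hi).2
      _ = ∑ _x : β, (I.card : ℝ) / Fintype.card β := by simp [mul_div_cancel₀]
  obtain ⟨x, -, hx⟩ := Finset.exists_le_of_sum_le Finset.univ_nonempty htotal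
  exact ⟨x, fun i hi =>
    (Finset.single_le_sum (f := fun j => μ j x) (fun j hj => (hμ j hj).1 x) hi).trans hx⟩

section Ingenerable

variable {α : ℕ → Type*} [∀ n, Fintype (α n)]

/-- `ℱ`-ingenerability of a sequence `s` with terms in finite types `α n`: up to one polynomial
factor, every `μ ∈ ℱ` eventually gives `s n` less than its uniform probability. The case of
`ℓ`-sequences is `α n = (Fin (ℓ n) → Bool)`. -/
def IsIngenerable (ℱ : Set (∀ n, α n → ℝ)) (s : ∀ n, α n) : Prop :=
  ∃ p : ℝ[X], ∀ μ ∈ ℱ, ∀ᶠ n : ℕ in atTop, μ n (s n) < p.eval (n : ℝ) / Fintype.card (α n)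

/-- Weak `ℱ`-ingenerability: the bound of `IsIngenerable` is only required at infinitely many
indices, which may depend on `μ ∈ ℱ`. -/
def IsWeaklyIngenerable (ℱ : Set (∀ n, α n → ℝ)) (s : ∀ n, α n) : Prop :=
  ∃ p : ℝ[X], ∀ μ ∈ ℱ, ∃ᶠ n : ℕ in atTop, μ n (s n) < p.eval (n : ℝ) / Fintype.card (α n)

variable {ℱ : Set (∀ n, α n → ℝ)} {s s₁ s₂ t d : ∀ n, α n}

theorem IsIngenerable.isWeaklyIngenerable_of_frequently_eq (hd : IsIngenerable ℱ d)
    (hs : ∃ᶠ n in atTop, s n = d n) : IsWeaklyIngenerable ℱ s := by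
  obtain ⟨p, hp⟩ := hd
  refine ⟨p, fun μ hμ => (hs.and_eventually (hp μ hμ)).mono ?_⟩
  rintro n ⟨hsd, hlt⟩
  rwa [hsd]

theorem IsIngenerable.of_forall_eq_or_eq (h₁ : IsIngenerable ℱ s₁) (h₂ : IsIngenerable ℱ s₂)
    (ht : ∀ n, t n = s₁ n ∨ t n = s₂ n) : IsIngenerable ℱ t := by
  obtain ⟨p, hp⟩ := h₁
  obtain ⟨q, hq⟩ := h₂
  obtain ⟨r, hr⟩ := exists_forall_eval_le_and_eval_le p q
  refine ⟨r, fun μ hμ => ?_⟩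
  filter_upwards [hp μ hμ, hq μ hμ] with n hpn hqn
  rcases ht n with h | h <;> rw [h]
  · exact hpn.trans_le (by gcongr; exact (hr n).1)
  · exact hqn.trans_le (by gcongr; exact (hr n).2)

theorem IsIngenerable.exists_isWeaklyIngenerable_not_isIngenerable (hd : IsIngenerable ℱ d)
    (ht : ¬ IsIngenerable ℱ t) : ∃ s, IsWeaklyIngenerable ℱ s ∧ ¬ IsIngenerable ℱ s := by
  let sEven : ∀ n, α n := fun n => if Even n then d n else t n
  let sOdd : ∀ n, α n := fun n => if Even n then t n else d n
  have hcover (n : ℕ) : t n = sEven n ∨ t n = sOdd n := by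
    by_cases hn : Even n <;> simp [sEven, sOdd, hn]
  by_cases hEven : IsIngenerable ℱ sEven
  · exact ⟨sOdd, hd.isWeaklyIngenerable_of_frequently_eq <|
      Nat.frequently_odd.mono fun n hn => if_neg (Nat.not_even_iff_odd.2 hn),
      fun hOdd => ht (hEven.of_forall_eq_or_eq hOdd hcover)⟩
  · exact ⟨sEven, hd.isWeaklyIngenerable_of_frequently_eq <|
      Nat.frequently_even.mono fun n hn => if_pos hn, hEven⟩

theorem exists_isIngenerable_of_countable [∀ n, Nonempty (α n)] (hcount : ℱ.Countable)
    (hsub : ∀ μ ∈ ℱ, ∀ n, IsSubprobability (μ n)) : ∃ d, IsIngenerable ℱ d := by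
  rcases ℱ.eq_empty_or_nonempty with rfl | hne
  · exact ⟨fun _ => Classical.arbitrary _, 0, fun μ hμ => hμ.elim⟩
  obtain ⟨e, rfl⟩ := hcount.exists_eq_range hne
  choose d hd using fun n => exists_forall_mem_le_card_div_card (Finset.range n)
    (μ := fun i => e i n) fun i _ => hsub (e i) ⟨i, rfl⟩ n
  refine ⟨d, X + 1, ?_⟩
  rintro _ ⟨i, rfl⟩
  filter_upwards [eventually_gt_atTop i] with n hin
  have hcard : (0 : ℝ) < Fintype.card (α n) := Nat.cast_pos.2 Fintype.card_pos
  calc e i n (d n) ≤ ((Finset.range n).card : ℝ) / Fintype.card (α n) :=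
        hd n i (Finset.mem_range.2 hin)
    _ < (X + 1 : ℝ[X]).eval (n : ℝ) / Fintype.card (α n) := by
        rw [Finset.card_range, eval_add, eval_X, eval_one]
        exact div_lt_div_of_pos_right (lt_add_one _) hcard

theorem not_isIngenerable_of_forall_eq_one
    (hcard : ∀ p : ℝ[X], ∃ᶠ n : ℕ in atTop, p.eval (n : ℝ) < Fintype.card (α n))
    {δ : ∀ n, α n → ℝ} (hδ : δ ∈ ℱ) (ht : ∀ n, δ n (t n) = 1) : ¬ IsIngenerable ℱ t := by
  rintro ⟨p, hp⟩
  obtain ⟨n, hlt, hn⟩ := ((hcard p).and_eventually (hp δ hδ)).exists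
  rw [ht] at hn
  exact hn.not_ge (div_le_one_of_le₀ hlt.le (Nat.cast_nonneg _))

theorem weakly_ingenerable_not_ingenerable_general
    (hcard : ∀ p : ℝ[X], ∃ᶠ n : ℕ in atTop, p.eval (n : ℝ) < Fintype.card (α n))
    (hcount : ℱ.Countable) (hsub : ∀ μ ∈ ℱ, ∀ n, IsSubprobability (μ n))
    {δ : ∀ n, α n → ℝ} (hδ : δ ∈ ℱ) (ht : ∀ n, δ n (t n) = 1) :
    ∃ s, IsWeaklyIngenerable ℱ s ∧ ¬ IsIngenerable ℱ s := by
  have (n : ℕ) : Nonempty (α n) := ⟨t n⟩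
  obtain ⟨d, hd⟩ := exists_isIngenerable_of_countable hcount hsub
  exact hd.exists_isWeaklyIngenerable_not_isIngenerable
    (not_isIngenerable_of_forall_eq_one hcard hδ ht)

end Ingenerable

/-- if `ℓ ∉ O(log)` then, for any countable family `ℱ` of sequences
of subprobability distributions on `{0,1}^{ℓ n}` containing the point masses at the
all-zero strings, there is an `ℓ`-sequence that is weakly `ℱ`-ingenerable but not
`ℱ`-ingenerable. -/
theorem weakly_ingenerable_not_ingenerable (ℓ : ℕ → ℕ)
    (hℓ : ∀ C : ℝ, 0 < C → ∀ N : ℕ, ∃ n ≥ N, C * Real.log n < (ℓ n : ℝ))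
    (ℱ : Set (∀ n : ℕ, (Fin (ℓ n) → Bool) → ℝ))
    (hcount : ℱ.Countable)
    (hsub : ∀ μ ∈ ℱ, ∀ n : ℕ, (∀ x, 0 ≤ μ n x) ∧ ∑ x : Fin (ℓ n) → Bool, μ n x ≤ 1)
    (hzero : (fun n (x : Fin (ℓ n) → Bool) => if x = (fun _ => false) then (1 : ℝ) else 0) ∈ ℱ) :
    ∃ s : ∀ n : ℕ, Fin (ℓ n) → Bool,
      -- weakly `ℱ`-ingenerable
      (∃ p : Polynomial ℝ, ∀ μ ∈ ℱ, ∀ N : ℕ, ∃ n ≥ N,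
        μ n (s n) < p.eval (n : ℝ) * ((2 : ℝ) ^ ℓ n)⁻¹) ∧
      -- but not `ℱ`-ingenerable
      ¬ (∃ p : Polynomial ℝ, ∀ μ ∈ ℱ, ∃ N : ℕ, ∀ n ≥ N,
        μ n (s n) < p.eval (n : ℝ) * ((2 : ℝ) ^ ℓ n)⁻¹) := by
  have hcard (p : ℝ[X]) :
      ∃ᶠ n : ℕ in atTop, p.eval (n : ℝ) < Fintype.card (Fin (ℓ n) → Bool) := by
    simpa using frequently_eval_lt_pow one_lt_two (fun C hC => frequently_atTop.2 (hℓ C hC)) p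
  simpa [IsWeaklyIngenerable, IsIngenerable, frequently_atTop, eventually_atTop, div_eq_mul_inv]
    using weakly_ingenerable_not_ingenerable_general (t := fun _ _ => false) hcard hcount hsub hzero
      fun _ => if_pos rfl
end
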